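/- arXiv:2502.01950 — 2 statements merged into one kernel-verified Lean document; each statement's English description precedes it below -/
import Mathlib

section
/- The codegree set of the binary octahedral group (the conformal special unitary group CSU(2,3) of order 48, with Fitting subgroup Q₈ and Sylow 2-subgroup Q₁₆) is {1, 2, 3, 8, 12, 24}. -/
open CategoryTheory

/-- The kernel of (the character of) a finite-dimensional complex representation. -/
noncomputable def charKer {G : Type} [Group G] (V : FDRep ℂ G) : Subgroup G :=
  MonoidHom.ker (Representation.asGroupHom V.ρ)

/-- The codegree of a character: `|G : ker χ| / χ(1)`. -/
noncomputable def codeg {G : Type} [Group G] (V : FDRep ℂ G) : ℕ :=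
  (charKer V).index / Module.finrank ℂ V

/-- The set of codegrees of irreducible characters of `G`. -/
def codSet (G : Type) [Group G] : Set ℕ :=
  {n | ∃ V : FDRep ℂ G, Simple V ∧ codeg V = n}

/-- Inner product of class functions on a finite group. -/
noncomputable def innerChar (G : Type) [Group G] (f g : G → ℂ) : ℂ :=
  (∑ᶠ x : G, f x * starRingEnd ℂ (g x)) / Nat.card G

open scoped Classical in
/-- The induced character `θ^G` of a character `θ` of a subgroup `H ≤ G`. -/
noncomputable def indChar {G : Type} [Group G] (H : Subgroup G) (θ : FDRep ℂ ↥H) : G → ℂ :=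
  fun g => (∑ᶠ x : G, if h : x * g * x⁻¹ ∈ H then θ.character ⟨x * g * x⁻¹, h⟩ else 0) /
    Nat.card ↥H

/-- The binary octahedral group `CSU(2,3)`: the group of order 48 whose Fitting subgroup is
`Q₈` and whose Sylow 2-subgroups are generalized quaternion of order 16. -/
def IsBinaryOctahedral (K : Type) [Group K] : Prop :=
  Nat.card K = 48 ∧
    (∃ Fit : Subgroup K, IsGreatest {N : Subgroup K | N.Normal ∧ Group.IsNilpotent ↥N} Fit ∧
      Nonempty (↥Fit ≃* QuaternionGroup 2)) ∧
    ∀ P : Sylow 2 K, Nonempty (↥(P : Subgroup K) ≃* QuaternionGroup 4)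

set_option linter.all false

namespace BinOct

section RepTheory

variable {G : Type} [Group G]

lemma codeg_iso {V W : FDRep ℂ G} (e : V ≅ W) : codeg V = codeg W := by
  have h1 : charKer V = charKer W := by
    ext g
    simp only [charKer, MonoidHom.mem_ker, Units.ext_iff, Representation.asGroupHom_apply,
      Units.val_one, FDRep.Iso.conj_ρ e]
    constructor
    · intro h
      rw [h]
      ext x
      simp
    · intro h
      have := congrArg (FDRep.isoToLinearEquiv e).symm.conj h
      ext x
      have := LinearMap.congr_fun this x
      simpa using this
  have h2 : Module.finrank ℂ V = Module.finrank ℂ W :=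
    (FDRep.isoToLinearEquiv e).finrank_eq
  rw [codeg, codeg, h1, h2]

lemma sum_hom [Fintype G] [DecidableEq G] {ι : Type} [Fintype ι] (W : ι → FDRep ℂ G)
    (hreg : ∀ g, ∑ i, (Module.finrank ℂ (W i) : ℂ) * (W i).character g =
      if g = 1 then (Nat.card G : ℂ) else 0) (V : FDRep ℂ G) :
    ∑ i, Module.finrank ℂ (W i) * Module.finrank ℂ (V ⟶ W i) = Module.finrank ℂ V := by
  have hne : (Nat.card G : ℂ) ≠ 0 := by
    exact_mod_cast Nat.card_pos.ne'
  haveI : Invertible (Nat.card G : ℂ) := invertibleOfNonzero hne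
  have key : ∑ i, (Module.finrank ℂ (W i) : ℂ) * (Module.finrank ℂ (V ⟶ W i) : ℂ)
      = Module.finrank ℂ V := by
    simp_rw [← FDRep.scalar_product_char_eq_finrank_equivariant]
    have : ∀ i, (Module.finrank ℂ (W i) : ℂ) * ((Nat.card G : ℂ)⁻¹ *
        ∑ g : G, (W i).character g * V.character g⁻¹) =
        (Nat.card G : ℂ)⁻¹ * ∑ g : G,
          ((Module.finrank ℂ (W i) : ℂ) * (W i).character g) * V.character g⁻¹ := by
      intro i
      simp only [Finset.mul_sum]
      refine Finset.sum_congr rfl fun g _ => by ring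
    simp_rw [this]
    rw [← Finset.mul_sum, Finset.sum_comm]
    simp_rw [← Finset.sum_mul, hreg]
    simp [hne]
  exact_mod_cast key

lemma codSet_eq [Fintype G] {ι : Type} [Fintype ι] (W : ι → FDRep ℂ G)
    (hpos : ∀ i, Module.finrank ℂ (W i) ≠ 0)
    (hreg : ∀ g, g ≠ 1 → ∑ i, (Module.finrank ℂ (W i) : ℂ) * (W i).character g = 0)
    (hreg1 : ∑ i, (Module.finrank ℂ (W i) : ℂ) * (W i).character 1 = Nat.card G) :
    codSet G = Set.range (fun i => codeg (W i)) := by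
  classical
  have hsum := sum_hom W (by
    intro g
    split_ifs with h
    · rw [h, hreg1]
    · exact hreg g h)
  have hsimple : ∀ i, Simple (W i) := by
    intro j
    haveI : NeZero (Nat.card G : ℂ) := ⟨by exact_mod_cast Nat.card_pos.ne'⟩
    rw [FDRep.simple_iff_end_is_rank_one]
    have h1 := hsum (W j)
    have h2 : Module.finrank ℂ (W j) * Module.finrank ℂ (W j ⟶ W j) ≤ Module.finrank ℂ (W j) := by
      exact (Finset.single_le_sum
        (f := fun i => Module.finrank ℂ (W i) * Module.finrank ℂ (W j ⟶ W i))
        (fun i _ => Nat.zero_le _) (Finset.mem_univ j)).trans h1.le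
    have h3 : Module.finrank ℂ (W j ⟶ W j) ≠ 0 := by
      intro h0
      rw [Module.finrank_eq_zero_iff_of_free] at h0
      have h4 : (𝟙 (W j) : W j ⟶ W j) = 0 := Subsingleton.elim _ _
      apply hpos j
      rw [Module.finrank_eq_zero_iff_of_free]
      refine ⟨fun x y => ?_⟩
      have h5 : ∀ x : W j, x = 0 := by
        intro x
        have := congrArg (fun f : W j ⟶ W j => f.hom.hom.hom x) h4
        exact this
      rw [h5 x, h5 y]
    have h4 : 0 < Module.finrank ℂ (W j) := Nat.pos_of_ne_zero (hpos j)
    have : Module.finrank ℂ (W j ⟶ W j) ≤ 1 := by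
      by_contra h
      nlinarith
    omega
  ext n
  constructor
  · rintro ⟨V, hV, rfl⟩
    have h1 := hsum V
    have h0 : Module.finrank ℂ V ≠ 0 := by
      intro h0
      rw [Module.finrank_eq_zero_iff_of_free] at h0
      apply id_nonzero V
      ext x
      exact Subsingleton.elim (α := V) _ _
    have : ∃ i, Module.finrank ℂ (V ⟶ W i) ≠ 0 := by
      by_contra! h
      simp [h] at h1
      exact h0 h1.symm
    obtain ⟨i, hi⟩ := this
    haveI := hsimple i
    rw [FDRep.finrank_hom_simple_simple] at hi
    have : Nonempty (V ≅ W i) := by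
      by_contra h
      simp [h] at hi
    exact ⟨i, (codeg_iso this.some).symm⟩
  · rintro ⟨i, rfl⟩
    exact ⟨W i, hsimple i, rfl⟩

variable {ι : Type} [Fintype ι] [DecidableEq ι]

/-- The representation attached to a matrix representation. -/
noncomputable def matRep (ρ : G →* Matrix ι ι ℂ) : FDRep ℂ G :=
  FDRep.of (V := ι → ℂ)
    (((Matrix.toLinAlgEquiv' : Matrix ι ι ℂ ≃ₐ[ℂ] _) : Matrix ι ι ℂ →* ((ι → ℂ) →ₗ[ℂ] (ι → ℂ))).comp ρ)

lemma matRep_ρ (ρ : G →* Matrix ι ι ℂ) (g : G) :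
    (matRep ρ).ρ g = Matrix.toLin' (ρ g) := rfl

lemma finrank_matRep (ρ : G →* Matrix ι ι ℂ) :
    Module.finrank ℂ (matRep ρ) = Fintype.card ι :=
  Module.finrank_fintype_fun_eq_card ℂ

lemma char_matRep (ρ : G →* Matrix ι ι ℂ) (g : G) :
    (matRep ρ).character g = (ρ g).trace :=
  (LinearMap.trace_eq_matrix_trace ℂ (Pi.basisFun ℂ ι) (Matrix.toLin' (ρ g))).trans
    (by rw [← Matrix.toLin_eq_toLin', LinearMap.toMatrix_toLin])

lemma mem_charKer_matRep (ρ : G →* Matrix ι ι ℂ) (g : G) :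
    g ∈ charKer (matRep ρ) ↔ ρ g = 1 := by
  rw [charKer, MonoidHom.mem_ker, Units.ext_iff, Representation.asGroupHom_apply, matRep_ρ,
    Units.val_one]
  constructor
  · intro h
    apply Matrix.toLin'.injective
    rw [h, Matrix.toLin'_one]
    rfl
  · intro h
    rw [h, Matrix.toLin'_one]
    rfl

end RepTheory
section Data

/-- Generators of (a homomorphic image of) the binary octahedral group inside a monoid. -/
structure OctData (M : Type) [Monoid M] where
  A : M
  X : M
  T : M
  S : M
  hA : A * (A * (A * A)) = 1
  hX : X * X = A * A
  hXA : X * A = A * (A * (A * X))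
  hT : T * (T * T) = 1
  hTA : T * A = X * T
  hTX : T * X = A * (X * T)
  hS : S * S = A * A
  hSA : S * A = A * (A * (X * S))
  hSX : S * X = A * (A * (A * S))
  hST : S * T = T * (T * S)

/-- Normal forms. -/
abbrev NF := Fin 4 × Fin 2 × Fin 3 × Fin 2

namespace OctData

variable {M : Type} [Monoid M] (D : OctData M)

/-- Evaluation of normal forms. -/
def F (x : NF) : M := D.A ^ x.1.val * (D.X ^ x.2.1.val * (D.T ^ x.2.2.1.val * D.S ^ x.2.2.2.val))

/-- Right multiplication by `A`. -/
def rA : NF → NF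
  | (m, n, 0, 0) => if n = 0 then (m + 1, 0, 0, 0) else (m + 3, 1, 0, 0)
  | (m, n, 1, 0) => if n = 0 then (m, 1, 1, 0) else (m + 2, 0, 1, 0)
  | (m, n, 2, 0) => if n = 0 then (m + 1, 1, 2, 0) else (m + 1, 0, 2, 0)
  | (m, n, 0, 1) => if n = 0 then (m + 2, 1, 0, 1) else (m, 0, 0, 1)
  | (m, n, 1, 1) => if n = 0 then (m + 3, 1, 1, 1) else (m + 3, 0, 1, 1)
  | (m, n, 2, 1) => if n = 0 then (m + 3, 0, 2, 1) else (m + 1, 1, 2, 1)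

/-- Right multiplication by `X`. -/
def rX : NF → NF
  | (m, n, 0, 0) => if n = 0 then (m, 1, 0, 0) else (m + 2, 0, 0, 0)
  | (m, n, 1, 0) => if n = 0 then (m + 1, 1, 1, 0) else (m + 1, 0, 1, 0)
  | (m, n, 2, 0) => if n = 0 then (m + 1, 0, 2, 0) else (m + 3, 1, 2, 0)
  | (m, n, 0, 1) => if n = 0 then (m + 3, 0, 0, 1) else (m + 1, 1, 0, 1)
  | (m, n, 1, 1) => if n = 0 then (m + 2, 1, 1, 1) else (m, 0, 1, 1)
  | (m, n, 2, 1) => if n = 0 then (m + 3, 1, 2, 1) else (m + 3, 0, 2, 1)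

/-- Right multiplication by `T`. -/
def rT : NF → NF
  | (m, n, a, 0) => (m, n, a + 1, 0)
  | (m, n, a, 1) => (m, n, a + 2, 1)

/-- Right multiplication by `S`. -/
def rS : NF → NF
  | (m, n, a, 0) => (m, n, a, 1)
  | (m, n, a, 1) => (m + 2, n, a, 0)

lemma hA' (z : M) : D.A * (D.A * (D.A * (D.A * z))) = z := by
  simpa only [mul_assoc, one_mul] using congrArg (· * z) D.hA
lemma hX' (z : M) : D.X * (D.X * z) = D.A * (D.A * z) := by
  simpa only [mul_assoc, one_mul] using congrArg (· * z) D.hX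
lemma hXA' (z : M) : D.X * (D.A * z) = D.A * (D.A * (D.A * (D.X * z))) := by
  simpa only [mul_assoc, one_mul] using congrArg (· * z) D.hXA
lemma hT' (z : M) : D.T * (D.T * (D.T * z)) = z := by
  simpa only [mul_assoc, one_mul] using congrArg (· * z) D.hT
lemma hTA' (z : M) : D.T * (D.A * z) = D.X * (D.T * z) := by
  simpa only [mul_assoc, one_mul] using congrArg (· * z) D.hTA
lemma hTX' (z : M) : D.T * (D.X * z) = D.A * (D.X * (D.T * z)) := by
  simpa only [mul_assoc, one_mul] using congrArg (· * z) D.hTX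
lemma hS' (z : M) : D.S * (D.S * z) = D.A * (D.A * z) := by
  simpa only [mul_assoc, one_mul] using congrArg (· * z) D.hS
lemma hSA' (z : M) : D.S * (D.A * z) = D.A * (D.A * (D.X * (D.S * z))) := by
  simpa only [mul_assoc, one_mul] using congrArg (· * z) D.hSA
lemma hSX' (z : M) : D.S * (D.X * z) = D.A * (D.A * (D.A * (D.S * z))) := by
  simpa only [mul_assoc, one_mul] using congrArg (· * z) D.hSX
lemma hST' (z : M) : D.S * (D.T * z) = D.T * (D.T * (D.S * z)) := by
  simpa only [mul_assoc, one_mul] using congrArg (· * z) D.hST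

set_option maxHeartbeats 4000000 in
lemma F_rA (x : NF) : D.F (rA x) = D.F x * D.A := by
  obtain ⟨m, n, a, b⟩ := x
  fin_cases m <;> fin_cases n <;> fin_cases a <;> fin_cases b <;>
  simp [F, rA, pow_succ, mul_assoc, hA, hX, hXA, hT, hTA, hTX, hS, hSA, hSX, hST,
    hA', hX', hXA', hT', hTA', hTX', hS', hSA', hSX', hST', Fin.val_add]

set_option maxHeartbeats 4000000 in
lemma F_rX (x : NF) : D.F (rX x) = D.F x * D.X := by
  obtain ⟨m, n, a, b⟩ := x
  fin_cases m <;> fin_cases n <;> fin_cases a <;> fin_cases b <;>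
  simp [F, rX, pow_succ, mul_assoc, hA, hX, hXA, hT, hTA, hTX, hS, hSA, hSX, hST,
    hA', hX', hXA', hT', hTA', hTX', hS', hSA', hSX', hST', Fin.val_add]

set_option maxHeartbeats 4000000 in
lemma F_rT (x : NF) : D.F (rT x) = D.F x * D.T := by
  obtain ⟨m, n, a, b⟩ := x
  fin_cases a <;> fin_cases b <;>
  simp [F, rT, pow_succ, mul_assoc, hA, hX, hXA, hT, hTA, hTX, hS, hSA, hSX, hST,
    hA', hX', hXA', hT', hTA', hTX', hS', hSA', hSX', hST', Fin.val_add]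

set_option maxHeartbeats 4000000 in
lemma F_rS (x : NF) : D.F (rS x) = D.F x * D.S := by
  obtain ⟨m, n, a, b⟩ := x
  fin_cases m <;> fin_cases n <;> fin_cases a <;> fin_cases b <;>
  simp [F, rS, pow_succ, mul_assoc, hA, hX, hXA, hT, hTA, hTX, hS, hSA, hSX, hST,
    hA', hX', hXA', hT', hTA', hTX', hS', hSA', hSX', hST', Fin.val_add]

/-- Multiplication of normal forms. -/
def nfMul (x y : NF) : NF :=
  rS^[y.2.2.2.val] (rT^[y.2.2.1.val] (rX^[y.2.1.val] (rA^[y.1.val] x)))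

lemma F_iter {r : NF → NF} {c : M} (h : ∀ x, D.F (r x) = D.F x * c) (k : ℕ) (x : NF) :
    D.F (r^[k] x) = D.F x * c ^ k := by
  induction k generalizing x with
  | zero => simp
  | succ k ih => rw [Function.iterate_succ_apply, ih, h, pow_succ', mul_assoc]

lemma F_nfMul (x y : NF) : D.F (nfMul x y) = D.F x * D.F y := by
  rw [nfMul, F_iter D D.F_rS, F_iter D D.F_rT, F_iter D D.F_rX, F_iter D D.F_rA]
  simp only [F, mul_assoc]

@[simp] lemma F_zero : D.F (0, 0, 0, 0) = 1 := by simp [F]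

/-- A bijective datum is universal. -/
noncomputable def lift {K : Type} [Group K] (C : OctData K) (hC : Function.Bijective C.F)
    (D : OctData M) : K →* M where
  toFun g := D.F ((Equiv.ofBijective C.F hC).symm g)
  map_one' := by
    have : (Equiv.ofBijective C.F hC).symm 1 = (0, 0, 0, 0) := by
      rw [Equiv.symm_apply_eq]
      simp
    rw [this, F_zero]
  map_mul' g h := by
    rw [← F_nfMul]
    congr 1
    rw [Equiv.symm_apply_eq, Equiv.ofBijective_apply, F_nfMul]
    simp only [Equiv.ofBijective_apply_symm_apply]

lemma lift_F {K : Type} [Group K] (C : OctData K) (hC : Function.Bijective C.F)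
    (D : OctData M) (x : NF) : lift C hC D (C.F x) = D.F x := by
  change D.F ((Equiv.ofBijective C.F hC).symm (Equiv.ofBijective C.F hC x)) = _
  rw [Equiv.symm_apply_apply]

/-- Push forward along a homomorphism. -/
def map {M' : Type} [Monoid M'] (f : M →* M') : OctData M' where
  A := f D.A
  X := f D.X
  T := f D.T
  S := f D.S
  hA := by simp only [← map_mul, D.hA, map_one]
  hX := by simp only [← map_mul, D.hX]
  hXA := by simp only [← map_mul, D.hXA]
  hT := by simp only [← map_mul, D.hT, map_one]
  hTA := by simp only [← map_mul, D.hTA]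
  hTX := by simp only [← map_mul, D.hTX]
  hS := by simp only [← map_mul, D.hS]
  hSA := by simp only [← map_mul, D.hSA]
  hSX := by simp only [← map_mul, D.hSX]
  hST := by simp only [← map_mul, D.hST]

lemma map_F {M' : Type} [Monoid M'] (f : M →* M') (x : NF) : (D.map f).F x = f (D.F x) := by
  simp [F, map]

/-- Twist by the sign character. -/
def neg {R : Type} [Ring R] (D : OctData R) : OctData R where
  A := D.A
  X := D.X
  T := D.T
  S := - D.S
  hA := D.hA
  hX := D.hX
  hXA := D.hXA
  hT := D.hT
  hTA := D.hTA
  hTX := D.hTX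
  hS := by simp [D.hS]
  hSA := by simp [D.hSA]
  hSX := by simp [D.hSX]
  hST := by simp [D.hST]

open scoped Kronecker in
/-- Tensor product. -/
def kron {R ι κ : Type} [CommRing R] [Fintype ι] [DecidableEq ι] [Fintype κ] [DecidableEq κ]
    (D : OctData (Matrix ι ι R)) (E : OctData (Matrix κ κ R)) :
    OctData (Matrix (ι × κ) (ι × κ) R) where
  A := D.A ⊗ₖ E.A
  X := D.X ⊗ₖ E.X
  T := D.T ⊗ₖ E.T
  S := D.S ⊗ₖ E.S
  hA := by simp only [← Matrix.mul_kronecker_mul, D.hA, E.hA, Matrix.one_kronecker_one]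
  hX := by simp only [← Matrix.mul_kronecker_mul, D.hX, E.hX]
  hXA := by simp only [← Matrix.mul_kronecker_mul, D.hXA, E.hXA]
  hT := by simp only [← Matrix.mul_kronecker_mul, D.hT, E.hT, Matrix.one_kronecker_one]
  hTA := by simp only [← Matrix.mul_kronecker_mul, D.hTA, E.hTA]
  hTX := by simp only [← Matrix.mul_kronecker_mul, D.hTX, E.hTX]
  hS := by simp only [← Matrix.mul_kronecker_mul, D.hS, E.hS]
  hSA := by simp only [← Matrix.mul_kronecker_mul, D.hSA, E.hSA]
  hSX := by simp only [← Matrix.mul_kronecker_mul, D.hSX, E.hSX]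
  hST := by simp only [← Matrix.mul_kronecker_mul, D.hST, E.hST]

open scoped Kronecker in
lemma kron_F {R ι κ : Type} [CommRing R] [Fintype ι] [DecidableEq ι] [Fintype κ] [DecidableEq κ]
    (D : OctData (Matrix ι ι R)) (E : OctData (Matrix κ κ R)) (x : NF) :
    (D.kron E).F x = D.F x ⊗ₖ E.F x := by
  have hp : ∀ (P : Matrix ι ι R) (Q : Matrix κ κ R) (n : ℕ), (P ⊗ₖ Q) ^ n = (P ^ n) ⊗ₖ (Q ^ n) := by
    intro P Q n
    induction n with
    | zero => simp
    | succ n ih => rw [pow_succ, pow_succ, pow_succ, ih, Matrix.mul_kronecker_mul]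
  simp only [F, kron, hp, Matrix.mul_kronecker_mul]

end OctData

end Data
section Matrices

open OctData

/-- The trivial representation. -/
def dTriv : OctData (Matrix (Fin 1) (Fin 1) ℤ) where
  A := 1
  X := 1
  T := 1
  S := 1
  hA := by decide
  hX := by decide
  hXA := by decide
  hT := by decide
  hTA := by decide
  hTX := by decide
  hS := by decide
  hSA := by decide
  hSX := by decide
  hST := by decide

/-- The two-dimensional representation of the quotient `S₃`. -/
def dPsi : OctData (Matrix (Fin 2) (Fin 2) ℤ) where
  A := 1
  X := 1
  T := !![0, -1; 1, -1]
  S := !![0, 1; 1, 0]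
  hA := by decide
  hX := by decide
  hXA := by decide
  hT := by decide
  hTA := by decide
  hTX := by decide
  hS := by decide
  hSA := by decide
  hSX := by decide
  hST := by decide

/-- The three-dimensional representation of the quotient `S₄`. -/
def dTheta : OctData (Matrix (Fin 3) (Fin 3) ℤ) where
  A := !![1, 0, 0; 0, -1, 0; 0, 0, -1]
  X := !![-1, 0, 0; 0, 1, 0; 0, 0, -1]
  T := !![0, 0, 1; 1, 0, 0; 0, 1, 0]
  S := !![0, -1, 0; -1, 0, 0; 0, 0, -1]
  hA := by decide
  hX := by decide
  hXA := by decide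
  hT := by decide
  hTA := by decide
  hTX := by decide
  hS := by decide
  hSA := by decide
  hSX := by decide
  hST := by decide

/-- The square root of two in the complex numbers. -/
noncomputable def r2 : ℂ := ((Real.sqrt 2 : ℝ) : ℂ)

lemma r2_sq : r2 * r2 = 2 := by
  rw [r2, ← Complex.ofReal_mul, Real.mul_self_sqrt (by norm_num)]
  norm_num

open Complex in
/-- The faithful two-dimensional representation. -/
noncomputable def dChi : OctData (Matrix (Fin 2) (Fin 2) ℂ) where
  A := !![I, 0; 0, -I]
  X := !![0, 1; -1, 0]
  T := (-1/2 : ℂ) • !![1 + I, 1 + I; -1 + I, 1 - I]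
  S := (r2 / 2) • !![I, -1; 1, -I]
  hA := by
    ext i j; fin_cases i <;> fin_cases j <;> simp
  hX := by
    ext i j; fin_cases i <;> fin_cases j <;> simp
  hXA := by
    ext i j; fin_cases i <;> fin_cases j <;> simp
  hT := by
    have hI := I_mul_I
    ext i j; fin_cases i <;> fin_cases j <;> simp <;> grind
  hTA := by
    have hI := I_mul_I
    ext i j; fin_cases i <;> fin_cases j <;> simp <;> grind
  hTX := by
    have hI := I_mul_I
    ext i j; fin_cases i <;> fin_cases j <;> simp <;> grind
  hS := by
    have hI := I_mul_I
    have hr := r2_sq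
    ext i j; fin_cases i <;> fin_cases j <;> simp <;> grind
  hSA := by
    have hI := I_mul_I
    ext i j; fin_cases i <;> fin_cases j <;> simp <;> grind
  hSX := by
    have hI := I_mul_I
    ext i j; fin_cases i <;> fin_cases j <;> simp <;> grind
  hST := by
    have hI := I_mul_I
    ext i j; fin_cases i <;> fin_cases j <;> simp <;> grind

/-- Extension of scalars. -/
noncomputable def toC {d : ℕ} (D : OctData (Matrix (Fin d) (Fin d) ℤ)) :
    OctData (Matrix (Fin d) (Fin d) ℂ) :=
  D.map ((Int.castRingHom ℂ).mapMatrix (m := Fin d)).toMonoidHom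

lemma toC_trace {d : ℕ} (D : OctData (Matrix (Fin d) (Fin d) ℤ)) (x : NF) :
    ((toC D).F x).trace = (((D.F x).trace : ℤ) : ℂ) := by
  rw [toC, map_F]
  simp [Matrix.trace]

lemma toC_eq_one {d : ℕ} (D : OctData (Matrix (Fin d) (Fin d) ℤ)) (x : NF) :
    (toC D).F x = 1 ↔ D.F x = 1 := by
  rw [toC, map_F]
  constructor
  · intro h
    ext i j
    have := congrFun (congrFun h i) j
    simp [Matrix.one_apply] at this ⊢
    split_ifs at this ⊢ <;> exact_mod_cast this
  · intro h
    rw [h]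
    simp

lemma psi_b1 : ∀ m n a, (dPsi.F (m, n, a, 1)).trace = 0 := by decide
lemma psi_a0 : ∀ m n, (dPsi.F (m, n, 0, 0)).trace = 2 := by decide
lemma psi_a1 : ∀ m n a, a ≠ 0 → (dPsi.F (m, n, a, 0)).trace = -1 := by decide
lemma theta_a1 : ∀ m n a, a ≠ 0 → (dTheta.F (m, n, a, 0)).trace = 0 := by decide
lemma theta_a0 : ∀ m n, (dTheta.F (m, n, 0, 0)).trace =
    if n = 0 ∧ (m = 0 ∨ m = 2) then 3 else -1 := by decide

lemma chi_a0 : ∀ m n, (dChi.F (m, n, 0, 0)).trace =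
    if n = 0 ∧ m = 0 then 2 else if n = 0 ∧ m = 2 then -2 else 0 := by
  intro m n
  fin_cases m <;> fin_cases n <;> simp [F, dChi, Matrix.trace_fin_two, pow_succ] <;> norm_num

lemma triv_ker : ∀ x, dTriv.F x = 1 := by decide
lemma sgn_ker : ∀ x, dTriv.neg.F x = 1 ↔ x.2.2.2 = 0 := by decide
lemma psi_ker : ∀ x, dPsi.F x = 1 ↔ x.2.2.2 = 0 ∧ x.2.2.1 = 0 := by decide
lemma theta_ker : ∀ x, dTheta.F x = 1 ↔ x = (0, 0, 0, 0) ∨ x = (2, 0, 0, 0) := by decide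
lemma thetaneg_ker : ∀ x, dTheta.neg.F x = 1 ↔ x = (0, 0, 0, 0) ∨ x = (2, 0, 0, 0) := by decide

end Matrices
section Groups

open QuaternionGroup OctData

abbrev Q8 := QuaternionGroup 2
abbrev Q16 := QuaternionGroup 4

lemma q16_cent : ∀ u v w : Q16, u * v ≠ v * u → w * u = u * w → w * v = v * w →
    w = 1 ∨ w = a 4 := by decide +kernel
lemma q16_inv : ∀ w : Q16, w * w = 1 → w = 1 ∨ w = a 4 := by decide +kernel
lemma q8_good : (Finset.univ.filter (fun p : Q8 × Q8 => p.1 * p.2 ≠ p.2 * p.1)).card = 24 := by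
  decide +kernel

variable {K : Type} [Group K]

lemma setup [Finite K] (h : IsBinaryOctahedral K) :
    Nat.card K = 48 ∧ ∃ φ : Q8 →* K, Function.Injective φ ∧
      (∀ k q, ∃ q', k * φ q * k⁻¹ = φ q') ∧
      (∀ c, (∀ q, c * φ q = φ q * c) → c = 1 ∨ c = φ (a 2)) ∧
      (∀ s : K, s * s = 1 → s = 1 ∨ s = φ (a 2)) := by
  obtain ⟨hcard, ⟨N, ⟨⟨hNn, hNnil⟩, hmax⟩, ⟨e⟩⟩, hsyl⟩ := h
  refine ⟨hcard, N.subtype.comp e.symm.toMonoidHom, ?_, ?_, ?_, ?_⟩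
  · exact Subtype.val_injective.comp e.symm.injective
  · intro k q
    refine ⟨e ⟨_, hNn.conj_mem _ (e.symm q).2 k⟩, ?_⟩
    simp
  all_goals
    have hNcard : Nat.card N = 2 ^ 3 := by
      rw [Nat.card_congr e.toEquiv, Nat.card_eq_fintype_card, QuaternionGroup.card]; rfl
    have hNp : IsPGroup 2 N := IsPGroup.of_card hNcard
    have hNP : ∀ P : Sylow 2 K, N ≤ P := fun P => hNp.le_sylow_of_normal P
    set z : K := ((e.symm (a 2) : N) : K) with hz
    have hzz : z * z = 1 := by
      rw [hz, ← Subgroup.coe_mul, ← map_mul]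
      have : (a 2 * a 2 : Q8) = 1 := by decide
      rw [this]; simp
    have hz1 : z ≠ 1 := by
      intro h1
      have h2 : e.symm (a 2) = 1 := Subtype.ext h1
      rw [map_eq_one_iff e.symm e.symm.injective] at h2
      revert h2; decide
    have hzN : z ∈ N := (e.symm (a 2)).2
    have hinP : ∀ (P : Sylow 2 K) (f : ↥(P : Subgroup K) ≃* Q16), f ⟨z, hNP P hzN⟩ = a 4 := by
      intro P f
      rcases q16_inv (f ⟨z, hNP P hzN⟩) (by
        rw [← map_mul]
        have : (⟨z, hNP P hzN⟩ * ⟨z, hNP P hzN⟩ : ↥(P : Subgroup K)) = 1 := Subtype.ext hzz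
        rw [this, map_one]) with h1 | h1
      · rw [map_eq_one_iff f f.injective] at h1
        exact absurd (congrArg Subtype.val h1) hz1
      · exact h1
  · -- centralizer
    obtain ⟨P⟩ : Nonempty (Sylow 2 K) := inferInstance
    obtain ⟨f⟩ := hsyl P
    have hPC : ∀ c ∈ (P : Subgroup K), (∀ n ∈ N, c * n = n * c) → c = 1 ∨ c = z := by
      intro c hc hcn
      let n1 : K := ((e.symm (a 1) : N) : K)
      let n2 : K := ((e.symm (xa 0) : N) : K)
      have h1 : n1 ∈ N := (e.symm (a 1)).2
      have h2 : n2 ∈ N := (e.symm (xa 0)).2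
      have h12 : n1 * n2 ≠ n2 * n1 := by
        intro h
        have h3 : e.symm (a 1) * e.symm (xa 0) = e.symm (xa 0) * e.symm (a 1) := Subtype.ext h
        rw [← map_mul, ← map_mul] at h3
        have := e.symm.injective h3
        revert this; decide
      rcases q16_cent (f ⟨n1, hNP P h1⟩) (f ⟨n2, hNP P h2⟩) (f ⟨c, hc⟩)
        (by
          rw [← map_mul, ← map_mul]
          intro h
          exact h12 (congrArg Subtype.val (f.injective h)))
        (by
          rw [← map_mul, ← map_mul]
          exact congrArg f (Subtype.ext (hcn n1 h1)))
        (by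
          rw [← map_mul, ← map_mul]
          exact congrArg f (Subtype.ext (hcn n2 h2))) with h | h
      · left
        rw [map_eq_one_iff f f.injective] at h
        exact congrArg Subtype.val h
      · right
        rw [← hinP P f] at h
        exact congrArg Subtype.val (f.injective h)
    let C : Subgroup K := Subgroup.centralizer (N : Set K)
    have hCmem : ∀ c, c ∈ C ↔ ∀ n ∈ N, c * n = n * c := by
      intro c
      rw [Subgroup.mem_centralizer_iff]
      exact ⟨fun h n hn => (h n hn).symm, fun h n hn => (h n hn).symm⟩
    have hPcard : Nat.card (P : Subgroup K) = 16 := by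
      rw [Nat.card_congr f.toEquiv, Nat.card_eq_fintype_card, QuaternionGroup.card]
    have hPidx : (P : Subgroup K).index = 3 := by
      have := (P : Subgroup K).card_mul_index
      rw [hPcard, hcard] at this
      omega
    have hrel : (P : Subgroup K).relIndex C ≤ 3 := by
      rw [← hPidx, ← Subgroup.relIndex_top_right]
      exact Subgroup.relIndex_le_of_le_right le_top (by
        rw [Subgroup.relIndex_top_right, hPidx]; norm_num)
    have hinf : Nat.card ((P : Subgroup K) ⊓ C : Subgroup K) ≤ 2 := by
      have hsub : (((P : Subgroup K) ⊓ C : Subgroup K) : Set K) ⊆ {1, z} := by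
        intro c hc
        exact hPC c hc.1 ((hCmem c).1 hc.2)
      calc Nat.card ((P : Subgroup K) ⊓ C : Subgroup K)
          = (((P : Subgroup K) ⊓ C : Subgroup K) : Set K).ncard := rfl
        _ ≤ ({1, z} : Set K).ncard := Set.ncard_le_ncard hsub
        _ ≤ 2 := (Set.ncard_pair hz1.symm).le
    have hCcard : Nat.card C ≤ 6 := by
      have h1 : Nat.card ((P : Subgroup K) ⊓ C : Subgroup K) * (P : Subgroup K).relIndex C
          = Nat.card C := by
        rw [← Subgroup.inf_relIndex_right]
        have h2 := Subgroup.relIndex_mul_relIndex ⊥ ((P : Subgroup K) ⊓ C) C bot_le inf_le_right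
        rwa [Subgroup.relIndex_bot_left, Subgroup.relIndex_bot_left] at h2
      rw [← h1]
      calc _ ≤ 2 * 3 := Nat.mul_le_mul hinf hrel
        _ = 6 := rfl
    have hzC : z ∈ C := by
      rw [hCmem]
      intro n hn
      have h3 : e.symm (a 2) * e.symm (e ⟨n, hn⟩) = e.symm (e ⟨n, hn⟩) * e.symm (a 2) := by
        rw [← map_mul, ← map_mul]
        congr 1
        generalize e ⟨n, hn⟩ = q
        revert q
        decide
      simpa using congrArg Subtype.val h3
    have hcent : 2 ≤ Nat.card (Subgroup.center C) := by
      have : Nontrivial (Subgroup.center C) := by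
        refine ⟨⟨1, ⟨⟨z, hzC⟩, ?_⟩, ?_⟩⟩
        · rw [Subgroup.mem_center_iff]
          intro g
          exact Subtype.ext ((hCmem g.1).1 g.2 z hzN)
        · intro h
          exact hz1 (congrArg (fun x : Subgroup.center C => (x : K)) h).symm
      exact Finite.one_lt_card
    have hq : Nat.card (C ⧸ Subgroup.center C) ≤ 3 := by
      have h1 := Subgroup.card_mul_index (Subgroup.center C)
      have h2 : Nat.card (C ⧸ Subgroup.center C) = (Subgroup.center C).index := rfl
      rw [h2]
      by_contra hlt
      push Not at hlt
      nlinarith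
    have hcyc : IsCyclic (C ⧸ Subgroup.center C) := by
      have hpos : 0 < Nat.card (C ⧸ Subgroup.center C) := Nat.card_pos
      generalize hn : Nat.card (C ⧸ Subgroup.center C) = n at hq hpos
      interval_cases n
      · haveI := (Nat.card_eq_one_iff_unique.1 hn).1
        exact isCyclic_of_subsingleton
      · haveI : Fact (Nat.Prime 2) := ⟨Nat.prime_two⟩
        exact isCyclic_of_prime_card hn
      · haveI : Fact (Nat.Prime 3) := ⟨Nat.prime_three⟩
        exact isCyclic_of_prime_card hn
    letI : CommGroup C := commGroupOfCyclicCenterQuotient (QuotientGroup.mk' (Subgroup.center C))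
      (QuotientGroup.ker_mk' _).le
    have hCN : C ≤ N := by
      apply hmax
      refine ⟨?_, ?_⟩
      · exact Subgroup.normal_centralizer
      · exact CommGroup.isNilpotent
    intro c hc
    have hcC : c ∈ C := by
      rw [hCmem]
      intro n hn
      simpa using hc (e ⟨n, hn⟩)
    exact hPC c (hNP P (hCN hcC)) ((hCmem c).1 hcC)
  · -- involutions
    intro s hs
    have hp : IsPGroup 2 (Subgroup.zpowers s) := by
      rw [IsPGroup.iff_card]
      have : orderOf s ∣ 2 := orderOf_dvd_of_pow_eq_one (by rw [pow_two, hs])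
      rw [Nat.card_zpowers]
      rcases (Nat.dvd_prime Nat.prime_two).1 this with h | h
      · exact ⟨0, by simpa using h⟩
      · exact ⟨1, by simpa using h⟩
    obtain ⟨P, hP⟩ := hp.exists_le_sylow
    obtain ⟨f⟩ := hsyl P
    have hsP : s ∈ (P : Subgroup K) := hP (Subgroup.mem_zpowers s)
    rcases q16_inv (f ⟨s, hsP⟩) (by
        rw [← map_mul]
        have : (⟨s, hsP⟩ * ⟨s, hsP⟩ : ↥(P : Subgroup K)) = 1 := Subtype.ext hs
        rw [this, map_one]) with h | h
    · left
      rw [map_eq_one_iff f f.injective] at h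
      exact congrArg Subtype.val h
    · right
      rw [← hinP P f] at h
      exact congrArg Subtype.val (f.injective h)

lemma comm_all (φ : Q8 →* K) (c : K) (h1 : c * φ (a 1) = φ (a 1) * c)
    (h2 : c * φ (xa 0) = φ (xa 0) * c) (q : Q8) : c * φ q = φ q * c := by
  have hgen : ∀ q : Q8, ∃ i : Fin 4, ∃ j : Fin 2, q = a 1 ^ i.val * xa 0 ^ j.val := by decide
  obtain ⟨i, j, rfl⟩ := hgen q
  rw [map_mul, map_pow, map_pow]
  have h3 : Commute c (φ (a 1)) := h1
  have h4 : Commute c (φ (xa 0)) := h2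
  exact (h3.pow_right _).mul_right (h4.pow_right _)

lemma exists_conj [Finite K] (hcard : Nat.card K = 48) (φ : Q8 →* K) (hinj : Function.Injective φ)
    (hn : ∀ k q, ∃ q', k * φ q * k⁻¹ = φ q')
    (hC : ∀ c, (∀ q, c * φ q = φ q * c) → c = 1 ∨ c = φ (a 2)) (u v : Q8) (huv : u * v ≠ v * u) :
    ∃ k, k * φ (a 1) = φ u * k ∧ k * φ (xa 0) = φ v * k := by
  classical
  haveI := Fintype.ofFinite K
  choose cj hcj using hn
  let g : K → Q8 × Q8 := fun k => (cj k (a 1), cj k (xa 0))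
  let good := Finset.univ.filter (fun p : Q8 × Q8 => p.1 * p.2 ≠ p.2 * p.1)
  have hsub : Finset.univ.image g ⊆ good := by
    intro p hp
    obtain ⟨k, -, rfl⟩ := Finset.mem_image.1 hp
    simp only [good, Finset.mem_filter, Finset.mem_univ, true_and, g]
    intro h
    have h1 := congrArg φ h
    rw [map_mul, map_mul, ← hcj, ← hcj] at h1
    have h2 : φ (a 1 * xa 0) = φ (xa 0 * a 1) := by
      rw [map_mul, map_mul]
      have := congrArg (fun y => k⁻¹ * y * k) h1
      simpa [mul_assoc] using this
    have := hinj h2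
    revert this; decide
  have hfib : ∀ b ∈ Finset.univ.image g, (Finset.univ.filter (fun k => g k = b)).card ≤ 2 := by
    intro b hb
    obtain ⟨k, -, rfl⟩ := Finset.mem_image.1 hb
    have : Finset.univ.filter (fun k' => g k' = g k) ⊆ {k, k * φ (a 2)} := by
      intro k' hk'
      have h1 : g k' = g k := (Finset.mem_filter.1 hk').2
      have hA : cj k' (a 1) = cj k (a 1) := congrArg Prod.fst h1
      have hX : cj k' (xa 0) = cj k (xa 0) := congrArg Prod.snd h1
      have hA' := congrArg φ hA
      have hX' := congrArg φ hX
      rw [← hcj, ← hcj] at hA' hX'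
      have := hC (k⁻¹ * k') (comm_all φ _ (by
          have := congrArg (fun y => k⁻¹ * y * k') hA'
          simpa [mul_assoc] using this) (by
          have := congrArg (fun y => k⁻¹ * y * k') hX'
          simpa [mul_assoc] using this))
      rw [Finset.mem_insert, Finset.mem_singleton]
      rcases this with h | h
      · left
        exact (inv_mul_eq_one.1 h).symm
      · right
        rw [← h]; simp
    exact (Finset.card_le_card this).trans Finset.card_le_two
  have hle := Finset.card_le_mul_card_image (f := g) Finset.univ 2 hfib
  rw [Finset.card_univ, ← Nat.card_eq_fintype_card, hcard] at hle
  have heq : Finset.univ.image g = good := by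
    apply Finset.eq_of_subset_of_card_le hsub
    have : good.card = 24 := q8_good
    omega
  have hmem : (u, v) ∈ Finset.univ.image g := by
    rw [heq]
    simpa [good] using huv
  obtain ⟨k, -, hk⟩ := Finset.mem_image.1 hmem
  have h1 : cj k (a 1) = u := congrArg Prod.fst hk
  have h2 : cj k (xa 0) = v := congrArg Prod.snd hk
  exact ⟨k, by rw [← h1, ← hcj]; simp, by rw [← h2, ← hcj]; simp⟩

end Groups
section Construct

open QuaternionGroup OctData

variable {K : Type} [Group K]

lemma exists_data [Finite K] (hcard : Nat.card K = 48) (φ : Q8 →* K) (hinj : Function.Injective φ)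
    (hn : ∀ k q, ∃ q', k * φ q * k⁻¹ = φ q')
    (hC : ∀ c, (∀ q, c * φ q = φ q * c) → c = 1 ∨ c = φ (a 2))
    (hI : ∀ s : K, s * s = 1 → s = 1 ∨ s = φ (a 2)) :
    ∃ C : OctData K, C.A = φ (a 1) ∧ C.X = φ (xa 0) := by
  obtain ⟨T₀, hTA, hTX⟩ := exists_conj hcard φ hinj hn hC (xa 0) (a 1 * xa 0) (by decide)
  obtain ⟨S, hSA, hSX⟩ := exists_conj hcard φ hinj hn hC (a 1 * (a 1 * xa 0)) (a 1 * (a 1 * a 1))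
    (by decide)
  simp only [map_mul] at hTX hSA hSX
  have hz : φ (a 2) = φ (a 1) * φ (a 1) := by rw [← map_mul]; rfl
  have hz1 : φ (a 1) * φ (a 1) ≠ 1 := by
    rw [← hz, ← map_one φ]
    intro h
    have := hinj h
    revert this; decide
  have hA : φ (a 1) * (φ (a 1) * (φ (a 1) * φ (a 1))) = 1 := by
    simp only [← map_mul]
    rw [← map_one φ]; rfl
  have hX : φ (xa 0) * φ (xa 0) = φ (a 1) * φ (a 1) := by
    simp only [← map_mul]; rfl
  have hXA : φ (xa 0) * φ (a 1) = φ (a 1) * (φ (a 1) * (φ (a 1) * φ (xa 0))) := by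
    simp only [← map_mul]
    congr 1
  have hAne : φ (a 1) ≠ φ (a 1) * (φ (a 1) * φ (xa 0)) := by
    simp only [← map_mul]
    intro h
    have := hinj h
    revert this; decide
  have hC' : ∀ c, c * φ (a 1) = φ (a 1) * c → c * φ (xa 0) = φ (xa 0) * c →
      c = 1 ∨ c = φ (a 1) * φ (a 1) := by
    intro c h1 h2
    rw [← hz]
    exact hC c (comm_all φ c h1 h2)
  rw [hz] at hI
  clear hz hn hC hinj hcard
  generalize φ (a 1) = A at *
  generalize φ (xa 0) = X at *
  have hA' : ∀ y, A * (A * (A * (A * y))) = y := fun y => by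
    simpa only [mul_assoc, one_mul] using congrArg (· * y) hA
  have hX' : ∀ y, X * (X * y) = A * (A * y) := fun y => by
    simpa only [mul_assoc, one_mul] using congrArg (· * y) hX
  have hXA' : ∀ y, X * (A * y) = A * (A * (A * (X * y))) := fun y => by
    simpa only [mul_assoc, one_mul] using congrArg (· * y) hXA
  obtain ⟨T, hTA, hTX, hT⟩ : ∃ T, T * A = X * T ∧ T * X = A * (X * T) ∧ T * (T * T) = 1 := by
    rw [mul_assoc] at hTX
    have hTA' : ∀ y, T₀ * (A * y) = X * (T₀ * y) := fun y => by
      simpa only [mul_assoc, one_mul] using congrArg (· * y) hTA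
    have hTX' : ∀ y, T₀ * (X * y) = A * (X * (T₀ * y)) := fun y => by
      simpa only [mul_assoc, one_mul] using congrArg (· * y) hTX
    rcases hC' (T₀ * (T₀ * T₀))
      (by simp only [mul_assoc, hA, hX, hXA, hTA, hTX, hA', hX', hXA', hTA', hTX'])
      (by simp only [mul_assoc, hA, hX, hXA, hTA, hTX, hA', hX', hXA', hTA', hTX']) with h | h
    · exact ⟨T₀, hTA, hTX, h⟩
    · refine ⟨A * (A * T₀), ?_, ?_, ?_⟩
      · simp only [mul_assoc, hA, hX, hXA, hTA, hTX, hA', hX', hXA', hTA', hTX']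
      · simp only [mul_assoc, hA, hX, hXA, hTA, hTX, hA', hX', hXA', hTA', hTX']
      · simp only [mul_assoc, hA, hX, hXA, hTA, hTX, hA', hX', hXA', hTA', hTX', h]
  have hTA' : ∀ y, T * (A * y) = X * (T * y) := fun y => by
    simpa only [mul_assoc, one_mul] using congrArg (· * y) hTA
  have hTX' : ∀ y, T * (X * y) = A * (X * (T * y)) := fun y => by
    simpa only [mul_assoc, one_mul] using congrArg (· * y) hTX
  have hT' : ∀ y, T * (T * (T * y)) = y := fun y => by
    simpa only [mul_assoc, one_mul] using congrArg (· * y) hT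
  simp only [mul_assoc] at hSA hSX
  have hSA' : ∀ y, S * (A * y) = A * (A * (X * (S * y))) := fun y => by
    simpa only [mul_assoc, one_mul] using congrArg (· * y) hSA
  have hSX' : ∀ y, S * (X * y) = A * (A * (A * (S * y))) := fun y => by
    simpa only [mul_assoc, one_mul] using congrArg (· * y) hSX
  have hS : S * S = A * A := by
    rcases hC' (S * S)
      (by simp only [mul_assoc, hA, hX, hXA, hSA, hSX, hA', hX', hXA', hSA', hSX'])
      (by simp only [mul_assoc, hA, hX, hXA, hSA, hSX, hA', hX', hXA', hSA', hSX']) with h | h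
    · exfalso
      rcases hI S h with h1 | h1
      · subst h1
        simp at hSA
        exact hAne (by simpa using hSA)
      · apply hAne
        have h2 := hSA
        rw [h1] at h2
        have h3 : A * A * A = (A * (A * X)) * (A * A) := by simpa only [mul_assoc] using h2
        have h4 : (A * (A * X)) * (A * A) = A * A * (A * (A * X)) := by
          simp only [mul_assoc, hA, hX, hXA, hA', hX', hXA']
        rw [h4] at h3
        exact mul_left_cancel h3
    · exact h
  have hS' : ∀ y, S * (S * y) = A * (A * y) := fun y => by
    simpa only [mul_assoc, one_mul] using congrArg (· * y) hS
  have hW : S * (T * (S * T)) = A * A := by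
    rcases hC' (S * (T * (S * T)))
      (by simp only [mul_assoc, hA, hX, hXA, hSA, hSX, hA', hX', hXA', hSA', hSX', hTA, hTX, hTA',
        hTX'])
      (by simp only [mul_assoc, hA, hX, hXA, hSA, hSX, hA', hX', hXA', hSA', hSX', hTA, hTX, hTA',
        hTX']) with h | h
    · exfalso
      apply hz1
      have h1 : S * (T * S) = T * T := by
        have := congrArg (· * (T * T)) h
        simpa only [mul_assoc, hT, mul_one, one_mul] using this
      have h2 : (S * (T * S)) * ((S * (T * S)) * (S * (T * S))) = A * A := by
        simp only [mul_assoc, hA, hX, hXA, hSA, hSX, hA', hX', hXA', hSA', hSX', hTA, hTX, hTA',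
          hTX', hS, hS', hT, hT']
      rw [h1] at h2
      simpa only [mul_assoc, hT, hT', mul_one] using h2.symm
    · exact h
  have hST : S * T = T * (T * S) := by
    have h1 : T * (T * S) * (S * T) = A * A := by
      simp only [mul_assoc, hA, hX, hXA, hA', hX', hXA', hTA, hTX, hTA', hTX', hS, hS', hT, hT']
      simp
    have h2 : S * T * (S * T) = A * A := by simpa only [mul_assoc] using hW
    exact mul_right_cancel (h2.trans h1.symm)
  exact ⟨⟨A, X, T, S, hA, hX, hXA, hT, hTA, hTX, hS, hSA, hSX, hST⟩, rfl, rfl⟩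

/-- The quaternion part of a normal form. -/
def toQ (x : NF) : Q8 := a 1 ^ x.1.val * xa 0 ^ x.2.1.val

lemma rA_snd : ∀ x, (rA x).2.2 = x.2.2 := by decide
lemma rX_snd : ∀ x, (rX x).2.2 = x.2.2 := by decide
lemma toQ_cent : ∀ x, toQ (rA x) = a 1 * toQ x → toQ (rX x) = xa 0 * toQ x →
    x = (0, 0, 0, 0) ∨ x = (2, 0, 0, 0) := by decide

/-- Inverse of a normal form. -/
def nfInv (y : NF) : NF :=
  rA^[4 - y.1.val] (rX^[4 - y.2.1.val] (rT^[3 - y.2.2.1.val] (rS^[4 - y.2.2.2.val] (0, 0, 0, 0))))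

lemma nfInv_mul : ∀ y, nfMul y (nfInv y) = (0, 0, 0, 0) := by decide +kernel
lemma eq_of_nfMul : ∀ x y, nfMul x (nfInv y) = (0, 0, 0, 0) → x = y := by decide +kernel

lemma data_bij [Finite K] (hcard : Nat.card K = 48) (φ : Q8 →* K) (hinj : Function.Injective φ)
    (C : OctData K) (hA : C.A = φ (a 1)) (hX : C.X = φ (xa 0)) : Function.Bijective C.F := by
  classical
  haveI := Fintype.ofFinite K
  have hF : ∀ x, C.F x = φ (toQ x) * (C.T ^ x.2.2.1.val * C.S ^ x.2.2.2.val) := by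
    intro x
    simp only [F, toQ, hA, hX, map_mul, map_pow, mul_assoc]
  have h1 : ∀ w, C.F w = 1 → w = (0, 0, 0, 0) := by
    intro w hw
    have e1 : toQ (rA w) = a 1 * toQ w := by
      have h := C.F_rA w
      have h' : C.F (rA w) = C.A * C.F w := by rw [h, hw]; simp
      rw [hF (rA w), hF w, rA_snd, hA, ← mul_assoc (φ (a 1)), ← map_mul] at h'
      exact hinj (mul_right_cancel h')
    have e2 : toQ (rX w) = xa 0 * toQ w := by
      have h := C.F_rX w
      have h' : C.F (rX w) = C.X * C.F w := by rw [h, hw]; simp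
      rw [hF (rX w), hF w, rX_snd, hX, ← mul_assoc (φ (xa 0)), ← map_mul] at h'
      exact hinj (mul_right_cancel h')
    rcases toQ_cent w e1 e2 with h | h
    · exact h
    · exfalso
      rw [h, hF] at hw
      simp at hw
      rw [← map_one φ] at hw
      have := hinj hw
      revert this; decide
  rw [Fintype.bijective_iff_injective_and_card]
  refine ⟨fun x y hxy => ?_, ?_⟩
  · apply eq_of_nfMul
    apply h1
    rw [F_nfMul, hxy, ← F_nfMul, nfInv_mul, F_zero]
  · rw [← Nat.card_eq_fintype_card (α := K), hcard]
    rfl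

lemma faithful (φ : Q8 →* K)
    (hn : ∀ k q, ∃ q', k * φ q * k⁻¹ = φ q')
    (hC : ∀ c, (∀ q, c * φ q = φ q * c) → c = 1 ∨ c = φ (a 2))
    {M : Type} [Monoid M] (ρ : K →* M) (hρ : ρ (φ (a 2)) ≠ 1) (k : K) (hk : ρ k = 1) : k = 1 := by
  have hq : ∀ q : Q8, q = 1 ∨ q = a 2 ∨ q * q = a 2 := by decide
  have hN : ∀ q, ρ (φ q) = 1 → q = 1 := by
    intro q h
    rcases hq q with h1 | h1 | h1
    · exact h1
    · rw [h1] at h; exact absurd h hρ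
    · exfalso; apply hρ; rw [← h1, map_mul, map_mul, h, mul_one]
  have hcomm : ∀ q, k * φ q = φ q * k := by
    intro q
    obtain ⟨q', h⟩ := hn k q
    have h2 : ρ (φ (q' * q⁻¹)) = 1 := by
      rw [map_mul, ← h]
      have hk' : ρ k⁻¹ = 1 := by
        have := map_mul ρ k k⁻¹
        rw [mul_inv_cancel, map_one, hk, one_mul] at this
        exact this.symm
      simp only [map_mul, hk, hk', one_mul, mul_one]
      rw [← map_mul, ← map_mul, mul_inv_cancel, map_one, map_one]
    have h3 := mul_inv_eq_one.1 (hN _ h2)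
    rw [h3] at h
    exact mul_inv_eq_iff_eq_mul.1 h
  rcases hC k hcomm with h | h
  · exact h
  · exact absurd (h ▸ hk) hρ

end Construct
section Final

open QuaternionGroup OctData

variable {K : Type} [Group K]

lemma neg_F0 {R : Type} [Ring R] (D : OctData R) (m n a) :
    D.neg.F (m, n, a, 0) = D.F (m, n, a, 0) := by
  simp [F, neg]

lemma neg_F1 {R : Type} [Ring R] (D : OctData R) (m n a) :
    D.neg.F (m, n, a, 1) = - D.F (m, n, a, 1) := by
  simp [F, neg]

lemma codeg_lift {ι : Type} [Fintype ι] [DecidableEq ι] (hcard : Nat.card K = 48)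
    (C : OctData K) (hC : Function.Bijective C.F) (D : OctData (Matrix ι ι ℂ)) (s : Finset NF)
    (hs : ∀ x, D.F x = 1 ↔ x ∈ s) (hs0 : s.card ≠ 0) :
    codeg (matRep (lift C hC D)) = 48 / s.card / Fintype.card ι := by
  have h1 : Nat.card (charKer (matRep (lift C hC D))) = s.card := by
    have e : s ≃ charKer (matRep (lift C hC D)) :=
      (Equiv.ofBijective C.F hC).subtypeEquiv (fun x => by
        rw [Equiv.ofBijective_apply, mem_charKer_matRep, lift_F, hs])
    rw [← Nat.card_congr e, Nat.card_eq_fintype_card, Fintype.card_coe]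
  have h2 := (charKer (matRep (lift C hC D))).card_mul_index
  rw [h1, hcard] at h2
  rw [codeg, finrank_matRep, ← h2, Nat.mul_div_cancel_left _ (Nat.pos_of_ne_zero hs0)]

lemma faithful_ker {ι : Type} [Fintype ι] [DecidableEq ι] (φ : Q8 →* K)
    (hn : ∀ k q, ∃ q', k * φ q * k⁻¹ = φ q')
    (hc : ∀ c, (∀ q, c * φ q = φ q * c) → c = 1 ∨ c = φ (a 2))
    (C : OctData K) (hA : C.A = φ (a 1)) (hC : Function.Bijective C.F)
    (D : OctData (Matrix ι ι ℂ)) (hD : (D.F (2, 0, 0, 0)).trace ≠ Fintype.card ι) (x : NF) :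
    D.F x = 1 ↔ x ∈ ({(0, 0, 0, 0)} : Finset NF) := by
  rw [Finset.mem_singleton]
  constructor
  · intro h
    apply hC.1
    rw [F_zero]
    refine faithful φ hn hc (lift C hC D) ?_ _ (by rw [lift_F, h])
    have h2 : φ (a 2) = C.F (2, 0, 0, 0) := by
      simp only [F, hA]
      simp
      rw [← map_pow]; rfl
    rw [h2, lift_F]
    intro h3
    apply hD
    rw [h3, Matrix.trace_one]
  · rintro rfl
    exact F_zero D

lemma toC_neg {d : ℕ} (D : OctData (Matrix (Fin d) (Fin d) ℤ)) : (toC D).neg = toC D.neg := by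
  simp only [toC, OctData.map, OctData.neg, OctData.mk.injEq]
  refine ⟨trivial, trivial, trivial, ?_⟩
  ext i j
  simp

lemma triv_tr (x : NF) : ((toC dTriv).F x).trace = 1 := by
  rw [toC_trace, triv_ker]; simp

lemma main [Finite K] (h : IsBinaryOctahedral K) :
    codSet K = {1, 2, 3, 8, 12, 24} := by
  classical
  haveI := Fintype.ofFinite K
  obtain ⟨hcard, φ, hinj, hn, hc, hI⟩ := setup h
  obtain ⟨C, hA, hX⟩ := exists_data hcard φ hinj hn hc hI
  have hC := data_bij hcard φ hinj C hA hX
  let W : Fin 8 → FDRep ℂ K := ![matRep (lift C hC (toC dTriv)), matRep (lift C hC (toC dTriv).neg),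
    matRep (lift C hC (toC dPsi)), matRep (lift C hC (toC dTheta)),
    matRep (lift C hC (toC dTheta).neg), matRep (lift C hC dChi), matRep (lift C hC dChi.neg),
    matRep (lift C hC (dChi.kron (toC dPsi)))]
  have hdim : ∀ i, Module.finrank ℂ (W i) = (![1, 1, 2, 3, 3, 2, 2, 4] : Fin 8 → ℕ) i := by
    intro i
    fin_cases i <;> exact (finrank_matRep _).trans (by simp)
  have hsum : ∀ x, ∑ i, (Module.finrank ℂ (W i) : ℂ) * (W i).character (C.F x) =
      if x = (0, 0, 0, 0) then 48 else 0 := by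
    rintro ⟨m, n, a, b⟩
    simp only [hdim]
    simp only [Fin.sum_univ_eight]
    simp only [W, Matrix.cons_val, finrank_matRep, char_matRep, lift_F, kron_F,
      Matrix.trace_kronecker, Fintype.card_prod, Fintype.card_fin]
    obtain rfl | rfl : b = 0 ∨ b = 1 := by revert b; decide
    · simp only [neg_F0, triv_tr]
      simp only [toC_trace]
      by_cases ha : a = 0
      · subst ha
        rw [psi_a0, theta_a0, chi_a0]
        simp only [Prod.mk.injEq]
        fin_cases m <;> fin_cases n <;> simp <;> norm_num
      · rw [psi_a1 _ _ _ ha, theta_a1 _ _ _ ha]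
        simp [ha]
        ring
    · simp only [neg_F1, triv_tr, Matrix.trace_neg]
      simp only [toC_trace, psi_b1]
      simp
  rw [codSet_eq W ?_ ?_ ?_]
  · have e0 := codeg_lift hcard C hC (toC dTriv) Finset.univ
      (fun x => by rw [toC_eq_one]; simp [triv_ker]) (by decide)
    have e1 := codeg_lift hcard C hC (toC dTriv).neg (Finset.univ.filter (fun x => x.2.2.2 = 0))
      (fun x => by rw [toC_neg, toC_eq_one, sgn_ker]; simp) (by decide)
    have e2 := codeg_lift hcard C hC (toC dPsi)
      (Finset.univ.filter (fun x => x.2.2.2 = 0 ∧ x.2.2.1 = 0))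
      (fun x => by rw [toC_eq_one, psi_ker]; simp) (by decide)
    have e3 := codeg_lift hcard C hC (toC dTheta) {(0, 0, 0, 0), (2, 0, 0, 0)}
      (fun x => by rw [toC_eq_one, theta_ker]; simp) (by decide)
    have e4 := codeg_lift hcard C hC (toC dTheta).neg {(0, 0, 0, 0), (2, 0, 0, 0)}
      (fun x => by rw [toC_neg, toC_eq_one, thetaneg_ker]; simp) (by decide)
    have e5 := codeg_lift hcard C hC dChi {(0, 0, 0, 0)}
      (faithful_ker φ hn hc C hA hC _ (by rw [chi_a0]; simp; norm_num)) (by decide)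
    have e6 := codeg_lift hcard C hC dChi.neg {(0, 0, 0, 0)}
      (faithful_ker φ hn hc C hA hC _ (by rw [neg_F0, chi_a0]; simp; norm_num)) (by decide)
    have e7 := codeg_lift hcard C hC (dChi.kron (toC dPsi)) {(0, 0, 0, 0)}
      (faithful_ker φ hn hc C hA hC _ (by
        rw [kron_F, Matrix.trace_kronecker, toC_trace, chi_a0, psi_a0]; simp; norm_num)) (by decide)
    have c1 : (Finset.univ.filter (fun x : NF => x.2.2.2 = 0)).card = 24 := by decide
    have c2 : (Finset.univ.filter (fun x : NF => x.2.2.2 = 0 ∧ x.2.2.1 = 0)).card = 8 := by decide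
    have c3 : ({(0, 0, 0, 0), (2, 0, 0, 0)} : Finset NF).card = 2 := by decide
    have c0 : (Finset.univ : Finset NF).card = 48 := by decide
    rw [c0] at e0
    rw [c1] at e1
    rw [c2] at e2
    rw [c3] at e3 e4
    simp only [Fintype.card_fin, Fintype.card_prod, Finset.card_singleton] at e0 e1 e2 e3 e4 e5 e6 e7
    norm_num at e0 e1 e2 e3 e4 e5 e6 e7
    ext k
    simp only [Set.mem_range, Fin.exists_fin_succ]
    simp [W, Fin.exists_fin_succ, e0, e1, e2, e3, e4, e5, e6, e7]
    omega
  · intro i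
    rw [hdim]
    revert i
    decide
  · intro g hg
    obtain ⟨x, rfl⟩ := hC.2 g
    rw [hsum, if_neg]
    rintro rfl
    exact hg (F_zero C)
  · have := hsum (0, 0, 0, 0)
    rw [F_zero, if_pos rfl] at this
    rw [this, hcard]; norm_num

end Final

end BinOct

theorem stmt_15 {K : Type} [Group K] [Finite K] (h : IsBinaryOctahedral K) :
    codSet K = {1, 2, 3, 8, 12, 24} := by
  exact BinOct.main h
end

section
/- For the symmetric group S₄, the Fitting height equals 3, the codegree set cod(S₄) has exactly 4 elements, and hence both bounds ℓ_F(G) ≤ |cod(G)| − 1 and ℓ_F(G) ≤ (|cod(G)| + 2)/2 are attained with equality. -/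
open CategoryTheory

/-- `M/N` is nilpotent: some term of the lower central series of `M` (relative to `M`)
lands in `N`. -/
def nilpotentFactor {G : Type} [Group G] (N M : Subgroup G) : Prop :=
  ∃ m : ℕ, (fun K => ⁅K, M⁆)^[m] M ≤ N

/-- The Fitting height: the length of the shortest normal series with nilpotent factors. -/
noncomputable def fittingHeight (G : Type) [Group G] : ℕ :=
  sInf {n | ∃ c : Fin (n + 1) → Subgroup G, c 0 = ⊥ ∧ c (Fin.last n) = ⊤ ∧
    (∀ i, (c i).Normal) ∧ (∀ i : Fin n, c i.castSucc ≤ c i.succ) ∧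
    ∀ i : Fin n, nilpotentFactor (c i.castSucc) (c i.succ)}

namespace S4aux

abbrev S4 := Equiv.Perm (Fin 4)

/-- The complex representation attached to an integral matrix representation. -/
noncomputable def mkRep {n : ℕ} (A : S4 →* Matrix (Fin n) (Fin n) ℤ) : FDRep ℂ S4 :=
  FDRep.of (V := Fin n → ℂ)
    (((Matrix.toLinAlgEquiv' : Matrix (Fin n) (Fin n) ℂ ≃ₐ[ℂ] _) : _ →* _).comp
      (((Int.castRingHom ℂ).mapMatrix : Matrix (Fin n) (Fin n) ℤ →+* _).toMonoidHom.comp A))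

lemma mkRep_ρ {n : ℕ} (A : S4 →* Matrix (Fin n) (Fin n) ℤ) (g : S4) :
    (mkRep A).ρ g = Matrix.toLin' ((A g).map (Int.cast : ℤ → ℂ)) := rfl

lemma mkRep_char {n : ℕ} (A : S4 →* Matrix (Fin n) (Fin n) ℤ) (g : S4) :
    (mkRep A).character g = (((A g).trace : ℤ) : ℂ) := by
  have h : (mkRep A).character g =
      LinearMap.trace ℂ (Fin n → ℂ) (Matrix.toLin' ((A g).map (Int.cast : ℤ → ℂ))) := rfl
  rw [h, Matrix.trace_toLin'_eq]
  simp [Matrix.trace]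

lemma mkRep_finrank {n : ℕ} (A : S4 →* Matrix (Fin n) (Fin n) ℤ) :
    Module.finrank ℂ (mkRep A) = n := by
  have h : Module.finrank ℂ (mkRep A) = Module.finrank ℂ (Fin n → ℂ) := rfl
  rw [h]; simp

lemma mkRep_ker {n : ℕ} (A : S4 →* Matrix (Fin n) (Fin n) ℤ) :
    charKer (mkRep A) = A.ker := by
  ext g
  rw [charKer, MonoidHom.mem_ker, MonoidHom.mem_ker, Units.ext_iff,
    Representation.asGroupHom_apply, mkRep_ρ]
  change Matrix.toLin' ((A g).map (Int.cast : ℤ → ℂ)) =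
    (LinearMap.id : (Fin n → ℂ) →ₗ[ℂ] (Fin n → ℂ)) ↔ _
  rw [← Matrix.toLin'_one]
  constructor
  · intro h
    have h2 := Matrix.toLin'.injective h
    ext i j
    have h3 := congrFun (congrFun h2 i) j
    simp only [Matrix.map_apply, Matrix.one_apply] at h3 ⊢
    split_ifs at h3 ⊢ <;> exact_mod_cast h3
  · intro h
    rw [h]; simp

lemma mkRep_simple {n : ℕ} (A : S4 →* Matrix (Fin n) (Fin n) ℤ)
    (h : ∑ g : S4, (A g).trace * (A g⁻¹).trace = 24) : Simple (mkRep A) := by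
  rw [FDRep.simple_iff_char_is_norm_one]
  simp only [mkRep_char]
  have : (((∑ g : S4, (A g).trace * (A g⁻¹).trace : ℤ)) : ℂ) = ((24 : ℤ) : ℂ) := by rw [h]
  push_cast at this
  rw [this]
  simp [Nat.card_eq_fintype_card, Fintype.card_perm, Nat.factorial]

lemma mkRep_codeg {n : ℕ} (A : S4 →* Matrix (Fin n) (Fin n) ℤ) (c : ℕ) (hc : 0 < c)
    (h : Fintype.card {g : S4 // A g = 1} = c) : codeg (mkRep A) = 24 / c / n := by
  rw [codeg, mkRep_ker, mkRep_finrank]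
  have h1 : Nat.card A.ker = c := by
    rw [← h, ← Nat.card_eq_fintype_card]; rfl
  have h2 := A.ker.card_mul_index
  rw [h1, Nat.card_eq_fintype_card (α := S4)] at h2
  have h3 : Fintype.card S4 = 24 := by
    simp [Fintype.card_perm, Nat.factorial]
  rw [h3] at h2
  rw [← h2, Nat.mul_div_cancel_left _ hc]

lemma codeg_iso {V W : FDRep ℂ S4} (i : V ≅ W) : codeg V = codeg W := by
  have hr : Module.finrank ℂ V = Module.finrank ℂ W := (FDRep.isoToLinearEquiv i).finrank_eq
  have hk : charKer V = charKer W := by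
    ext g
    rw [charKer, charKer, MonoidHom.mem_ker, MonoidHom.mem_ker, Units.ext_iff, Units.ext_iff,
      Representation.asGroupHom_apply, Representation.asGroupHom_apply, FDRep.Iso.conj_ρ i]
    constructor
    · intro h
      rw [h]
      ext x
      simp [LinearEquiv.conj_apply]
    · intro h
      apply (FDRep.isoToLinearEquiv i).conj.injective
      rw [h]
      ext x
      simp [LinearEquiv.conj_apply]
  rw [codeg, codeg, hr, hk]

/-- trivial -/
def A1 : S4 →* Matrix (Fin 1) (Fin 1) ℤ := 1

/-- scalar matrices given by the sign -/
def sgn (n : ℕ) : S4 →* Matrix (Fin n) (Fin n) ℤ where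
  toFun g := Matrix.scalar (Fin n) ((Equiv.Perm.sign g : ℤˣ) : ℤ)
  map_one' := by simp
  map_mul' g h := by rw [map_mul, Units.val_mul, map_mul]

/-- The standard representation. -/
def stdFun (g : S4) : Matrix (Fin 3) (Fin 3) ℤ := Matrix.of fun j i =>
  (if g i.castSucc = j.castSucc then 1 else 0) - (if g 3 = j.castSucc then 1 else 0)

/-- The index of the partition into pairs with block `{a, b}`. -/
def pr (a b : Fin 4) : ℕ := Nat.xor a.val b.val

/-- The two-dimensional representation. -/
def twoFun (g : S4) : Matrix (Fin 2) (Fin 2) ℤ := Matrix.of fun j i =>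
  (if pr (g 0) (g i.castSucc.succ) = j.val + 1 then 1 else 0) -
    (if pr (g 0) (g 3) = j.val + 1 then 1 else 0)

lemma stdFun_mul (g h : S4) : stdFun (g * h) = stdFun g * stdFun h := by
  ext j i
  have hs : (stdFun g * stdFun h) j i = ∑ k : Fin 4,
      ((if g k = j.castSucc then (1 : ℤ) else 0) - (if g 3 = j.castSucc then 1 else 0)) *
      ((if h i.castSucc = k then 1 else 0) - (if h 3 = k then 1 else 0)) := by
    rw [Matrix.mul_apply, Fin.sum_univ_castSucc (n := 3)]
    have hl : (Fin.last 3 : Fin 4) = 3 := rfl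
    rw [hl, sub_self, zero_mul, add_zero]
    rfl
  rw [hs]
  simp only [mul_sub, Finset.sum_sub_distrib, mul_ite, mul_one, mul_zero, Finset.sum_ite_eq,
    Finset.mem_univ, if_true]
  rw [sub_sub_sub_cancel_right]
  rfl

def A3 : S4 →* Matrix (Fin 3) (Fin 3) ℤ where
  toFun := stdFun
  map_one' := by decide +kernel
  map_mul' := stdFun_mul

def A2 : S4 →* Matrix (Fin 2) (Fin 2) ℤ where
  toFun := twoFun
  map_one' := by decide +kernel
  map_mul' := by decide +kernel

def A3s : S4 →* Matrix (Fin 3) (Fin 3) ℤ where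
  toFun g := sgn 3 g * A3 g
  map_one' := by simp
  map_mul' g h := by
    have hc : sgn 3 h * A3 g = A3 g * sgn 3 h :=
      (Matrix.scalar_commute _ (fun _ => Commute.all _ _) _)
    rw [map_mul, map_mul, mul_assoc, mul_assoc, ← mul_assoc (sgn 3 h), hc, mul_assoc]

instance s1 : Simple (mkRep A1) := mkRep_simple _ (by decide +kernel)
instance s1' : Simple (mkRep (sgn 1)) := mkRep_simple _ (by decide +kernel)
instance s2 : Simple (mkRep A2) := mkRep_simple _ (by decide +kernel)
instance s3 : Simple (mkRep A3) := mkRep_simple _ (by decide +kernel)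
instance s3' : Simple (mkRep A3s) := mkRep_simple _ (by decide +kernel)

lemma c1 : codeg (mkRep A1) = 1 := mkRep_codeg _ 24 (by norm_num) (by decide +kernel)
lemma c1' : codeg (mkRep (sgn 1)) = 2 := mkRep_codeg _ 12 (by norm_num) (by decide +kernel)
lemma c2 : codeg (mkRep A2) = 3 := mkRep_codeg _ 4 (by norm_num) (by decide +kernel)
lemma c3 : codeg (mkRep A3) = 8 := mkRep_codeg _ 1 (by norm_num) (by decide +kernel)
lemma c3' : codeg (mkRep A3s) = 8 := mkRep_codeg _ 1 (by norm_num) (by decide +kernel)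

lemma regular : ∀ g : S4, (A1 g⁻¹).trace + (sgn 1 g⁻¹).trace + 2 * (A2 g⁻¹).trace +
    3 * (A3 g⁻¹).trace + 3 * (A3s g⁻¹).trace = if g = 1 then 24 else 0 := by
  decide +kernel

lemma orth (V : FDRep ℂ S4) [Simple V] {n : ℕ} (A : S4 →* Matrix (Fin n) (Fin n) ℤ)
    [Simple (mkRep A)] (h : ¬ Nonempty (V ≅ mkRep A)) :
    ∑ g : S4, V.character g * (((A g⁻¹).trace : ℤ) : ℂ) = 0 := by
  have : Invertible (Nat.card S4 : ℂ) := invertibleOfNonzero (by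
    simp)
  have h1 := FDRep.char_orthonormal V (mkRep A)
  rw [if_neg h] at h1
  simp only [mkRep_char] at h1
  rcases mul_eq_zero.1 h1 with h2 | h2
  · simp at h2
  · exact h2

lemma classify (V : FDRep ℂ S4) [Simple V] :
    Nonempty (V ≅ mkRep A1) ∨ Nonempty (V ≅ mkRep (sgn 1)) ∨ Nonempty (V ≅ mkRep A2) ∨
    Nonempty (V ≅ mkRep A3) ∨ Nonempty (V ≅ mkRep A3s) := by
  by_contra hcon
  simp only [not_or] at hcon
  obtain ⟨h1, h2, h3, h4, h5⟩ := hcon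
  have e1 := orth V A1 h1
  have e2 := orth V (sgn 1) h2
  have e3 := orth V A2 h3
  have e4 := orth V A3 h4
  have e5 := orth V A3s h5
  have key : ∑ g : S4, V.character g * (((if g = 1 then 24 else 0 : ℤ)) : ℂ) = 0 := by
    have : ∀ g : S4, V.character g * (((if g = 1 then 24 else 0 : ℤ)) : ℂ) =
        V.character g * (((A1 g⁻¹).trace : ℤ) : ℂ) + V.character g * (((sgn 1 g⁻¹).trace : ℤ) : ℂ)
        + 2 * (V.character g * (((A2 g⁻¹).trace : ℤ) : ℂ))
        + 3 * (V.character g * (((A3 g⁻¹).trace : ℤ) : ℂ))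
        + 3 * (V.character g * (((A3s g⁻¹).trace : ℤ) : ℂ)) := by
      intro g
      rw [← regular g]
      push_cast
      ring
    simp only [this, Finset.sum_add_distrib, ← Finset.mul_sum, e1, e2, e3, e4, e5]
    simp
  have h24 : ∑ g : S4, V.character g * (((if g = 1 then 24 else 0 : ℤ)) : ℂ) =
      V.character 1 * 24 := by
    rw [Finset.sum_eq_single (1 : S4)]
    · simp
    · intro b _ hb
      simp [hb]
    · simp
  rw [h24, FDRep.char_one] at key
  have h0 : Module.finrank ℂ V = 0 := by
    rcases mul_eq_zero.1 key with h | h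
    · exact_mod_cast h
    · norm_num at h
  have hch : ∀ g, V.character g = 0 := by
    intro g
    have : Subsingleton V := Module.finrank_zero_iff.1 h0
    have : V.ρ g = 0 := Subsingleton.elim _ _
    rw [FDRep.character, this, map_zero]
  have hs := (FDRep.simple_iff_char_is_norm_one V).1 inferInstance
  simp only [hch, mul_zero, Finset.sum_const_zero] at hs
  have hcard : Nat.card S4 ≠ 0 := Nat.card_pos.ne'
  exact hcard (by exact_mod_cast hs.symm)

lemma codSet_eq : codSet S4 = {1, 2, 3, 8} := by
  ext n
  simp only [codSet, Set.mem_ofPred_eq, Set.mem_insert_iff, Set.mem_singleton_iff]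
  constructor
  · rintro ⟨V, hV, rfl⟩
    rcases classify V with ⟨⟨i⟩⟩ | ⟨⟨i⟩⟩ | ⟨⟨i⟩⟩ | ⟨⟨i⟩⟩ | ⟨⟨i⟩⟩ <;> rw [codeg_iso i]
    · simp [c1]
    · simp [c1']
    · simp [c2]
    · simp [c3]
    · simp [c3']
  · rintro (rfl | rfl | rfl | rfl)
    · exact ⟨_, s1, c1⟩
    · exact ⟨_, s1', c1'⟩
    · exact ⟨_, s2, c2⟩
    · exact ⟨_, s3, c3⟩

lemma cod_card : (codSet S4).ncard = 4 := by
  rw [codSet_eq]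
  have : ({1, 2, 3, 8} : Set ℕ) = (({1, 2, 3, 8} : Finset ℕ) : Set ℕ) := by simp
  rw [this, Set.ncard_coe_finset]
  rfl

abbrev Alt : Subgroup S4 := (Equiv.Perm.sign : S4 →* ℤˣ).ker
abbrev V4 : Subgroup S4 := A2.ker

lemma iter_ge {K L M : Subgroup S4} (hKL : K ≤ ⁅K, L⁆) (hK : K ≤ M) (hL : L ≤ M) (m : ℕ) :
    K ≤ (fun K => ⁅K, M⁆)^[m] M := by
  induction m with
  | zero => exact hK
  | succ m ih =>
    rw [Function.iterate_succ_apply']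
    exact hKL.trans (Subgroup.commutator_mono ih hL)

lemma alt_aux : ∀ g : S4, Equiv.Perm.sign g = 1 →
    ∃ h : S4, Equiv.Perm.sign h = 1 ∧ ∃ k : S4, h * k * h⁻¹ * k⁻¹ = g := by
  decide +kernel

lemma v4_aux : ∀ g : S4, twoFun g = 1 →
    ∃ h : S4, twoFun h = 1 ∧ ∃ k : S4, Equiv.Perm.sign k = 1 ∧ h * k * h⁻¹ * k⁻¹ = g := by
  decide +kernel

lemma alt_le : Alt ≤ ⁅Alt, (⊤ : Subgroup S4)⁆ := by
  intro g hg
  obtain ⟨h, hh, k, rfl⟩ := alt_aux g hg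
  exact Subgroup.commutator_mem_commutator (H₁ := Alt) hh (Subgroup.mem_top k)

lemma v4_le : V4 ≤ ⁅V4, Alt⁆ := by
  intro g hg
  obtain ⟨h, hh, k, hk, rfl⟩ := v4_aux g hg
  exact Subgroup.commutator_mem_commutator (H₁ := V4) (H₂ := Alt) hh hk

lemma v4_le_alt : V4 ≤ Alt := by
  have : ∀ g : S4, twoFun g = 1 → Equiv.Perm.sign g = 1 := by decide +kernel
  exact fun g hg => this g hg

lemma v4_ne : ¬ V4 ≤ ⊥ := by
  have : ∃ g : S4, twoFun g = 1 ∧ g ≠ 1 := by decide +kernel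
  obtain ⟨g, hg, hne⟩ := this
  exact fun h => hne (Subgroup.mem_bot.1 (h (show g ∈ V4 from hg)))

lemma comm_alt : ⁅Alt, Alt⁆ ≤ V4 := by
  have : ∀ g : S4, Equiv.Perm.sign g = 1 → ∀ h : S4, Equiv.Perm.sign h = 1 →
      twoFun (g * h * g⁻¹ * h⁻¹) = 1 := by decide +kernel
  exact Subgroup.commutator_le.2 fun g hg h hh => this g hg h hh

lemma comm_v4 : ⁅V4, V4⁆ ≤ ⊥ := by
  have : ∀ g : S4, twoFun g = 1 → ∀ h : S4, twoFun h = 1 →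
      g * h * g⁻¹ * h⁻¹ = 1 := by decide +kernel
  exact Subgroup.commutator_le.2 fun g hg h hh => Subgroup.mem_bot.2 (this g hg h hh)

lemma comm_top : ⁅(⊤ : Subgroup S4), (⊤ : Subgroup S4)⁆ ≤ Alt := by
  refine Subgroup.commutator_le.2 fun g _ h _ => ?_
  rw [MonoidHom.mem_ker, map_commutatorElement, commutatorElement_eq_one_iff_mul_comm, mul_comm]

lemma alt_of_factor {N : Subgroup S4} (h : nilpotentFactor N ⊤) : Alt ≤ N := by
  obtain ⟨m, hm⟩ := h
  exact (iter_ge alt_le le_top le_rfl m).trans hm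

lemma v4_of_factor {N M : Subgroup S4} (hM : Alt ≤ M) (h : nilpotentFactor N M) : V4 ≤ N := by
  obtain ⟨m, hm⟩ := h
  exact (iter_ge v4_le (v4_le_alt.trans hM) hM m).trans hm

lemma height : fittingHeight S4 = 3 := by
  have hmem : 3 ∈ {n | ∃ c : Fin (n + 1) → Subgroup S4, c 0 = ⊥ ∧ c (Fin.last n) = ⊤ ∧
      (∀ i, (c i).Normal) ∧ (∀ i : Fin n, c i.castSucc ≤ c i.succ) ∧
      ∀ i : Fin n, nilpotentFactor (c i.castSucc) (c i.succ)} := by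
    refine ⟨![⊥, V4, Alt, ⊤], rfl, rfl, ?_, ?_, ?_⟩
    · intro i
      fin_cases i
      · exact (inferInstance : (⊥ : Subgroup S4).Normal)
      · exact (inferInstance : V4.Normal)
      · exact (inferInstance : Alt.Normal)
      · exact (inferInstance : (⊤ : Subgroup S4).Normal)
    · intro i
      fin_cases i
      · exact (bot_le : ⊥ ≤ V4)
      · exact v4_le_alt
      · exact (le_top : Alt ≤ ⊤)
    · intro i
      fin_cases i
      · exact ⟨1, comm_v4⟩
      · exact ⟨1, comm_alt⟩
      · exact ⟨1, comm_top⟩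
  apply le_antisymm
  · exact Nat.sInf_le hmem
  · apply le_csInf ⟨3, hmem⟩
    · rintro n ⟨c, h0, hl, -, -, hf⟩
      by_contra hn
      have hn' : n = 0 ∨ n = 1 ∨ n = 2 := by omega
      rcases hn' with rfl | rfl | rfl
      · have e : (⊥ : Subgroup S4) = ⊤ := h0.symm.trans hl
        exact v4_ne (e ▸ le_top)
      · have h1 := hf 0
        change nilpotentFactor (c 0) (c (Fin.last 1)) at h1
        rw [h0, hl] at h1
        exact v4_ne (v4_le_alt.trans (alt_of_factor h1))
      · have h1 := hf 0
        have h2 := hf 1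
        change nilpotentFactor (c 0) (c 1) at h1
        change nilpotentFactor (c 1) (c (Fin.last 2)) at h2
        rw [hl] at h2
        rw [h0] at h1
        exact v4_ne (v4_of_factor (alt_of_factor h2) h1)

end S4aux

theorem stmt_17 :
    fittingHeight (Equiv.Perm (Fin 4)) = 3 ∧
    (codSet (Equiv.Perm (Fin 4))).ncard = 4 ∧
    fittingHeight (Equiv.Perm (Fin 4)) = (codSet (Equiv.Perm (Fin 4))).ncard - 1 ∧
    2 * fittingHeight (Equiv.Perm (Fin 4)) = (codSet (Equiv.Perm (Fin 4))).ncard + 2 := by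
  rw [S4aux.height, S4aux.cod_card]
  norm_num
end
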